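/- arXiv:1910.09500 — 2 statements merged into one kernel-verified Lean document; each statement's English description precedes it below -/
import Mathlib

section
/- Let λ : ℤ₊ → ℝ satisfy (UB) and let N ≥ 1. Then 𝔥_N(x) > 0 for every x ∈ W^N, and 𝔥_N is harmonic for the Karlin–McGregor semigroup: for all t ≥ 0 and x ∈ W^N, Σ_{y ∈ W^N} det( e^{tL}(x_i, y_j) )_{i,j=1}^N · 𝔥_N(y) = 𝔥_N(x), the series converging absolutely. -/
open Complex MeasureTheory Finset
open scoped Real ComplexOrder

/-- ψ_x(w) = ∏_{k=0}^{x} λ(k)/(λ(k)−w). -/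
noncomputable def psiF (lam : ℕ → ℝ) (x : ℕ) (w : ℂ) : ℂ :=
  ∏ k ∈ Finset.range (x + 1), (lam k : ℂ) / ((lam k : ℂ) - w)

/-- p_x(w) = ∏_{k=0}^{x−1} (λ(k)−w)/λ(k). -/
noncomputable def pF (lam : ℕ → ℝ) (x : ℕ) (w : ℂ) : ℂ :=
  ∏ k ∈ Finset.range x, (((lam k : ℂ) - w) / (lam k : ℂ))

/-- e^{tL}(x,y) := −(1/λ(y))·(1/(2πi)) ∮_{|w|=R} ψ_y(w) p_x(w) e^{−tw} dw,
the contour being the counterclockwise circle of radius R centred at 0. -/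
noncomputable def eL (lam : ℕ → ℝ) (R t : ℝ) (x y : ℕ) : ℂ :=
  -(1 / (lam y : ℂ)) * ((2 * (Real.pi : ℂ) * Complex.I)⁻¹ *
    ∮ w in C(0, R), psiF lam y w * pF lam x w * Complex.exp (-(t : ℂ) * w))

/-- y ≺ x : interlacing, x_1 ≤ y_1 < x_2 ≤ y_2 < ⋯ ≤ y_N < x_{N+1}.
(Membership of (y,x) in W^{N,N+1} is exactly this condition.) -/
def Interlace {N : ℕ} (y : Fin N → ℕ) (x : Fin (N + 1) → ℕ) : Prop :=
  ∀ i : Fin N, x i.castSucc ≤ y i ∧ y i < x i.succ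

instance {N : ℕ} (y : Fin N → ℕ) (x : Fin (N + 1) → ℕ) : Decidable (Interlace y x) :=
  inferInstanceAs (Decidable (∀ i : Fin N, x i.castSucc ≤ y i ∧ y i < x i.succ))

/-- 𝔥_N, defined recursively: 𝔥_1 ≡ 1 and 𝔥_{N+1}(x) = Σ_{y ≺ x} ∏ λ(y_i)⁻¹ 𝔥_N(y)
(so 𝔥_1(x) = 1 since the empty interlacing condition is vacuous and the unique
y : Fin 0 → ℕ contributes the empty product). -/
noncomputable def hfun (lam : ℕ → ℝ) : (N : ℕ) → (Fin N → ℕ) → ℝ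
  | 0, _ => 1
  | (N + 1), x => ∑' y : { y : Fin N → ℕ // Interlace y x },
      (∏ i, (lam (y.1 i))⁻¹) * hfun lam N y.1

/-!
The generator `L f = λ (f (· + 1) - f)` has iterated antiderivatives `h_0 = 1, h_1, h_2, …` with
`L h_{j+1} = h_j` and `h_{j+1}(0) = 0`. Summing over interlacing configurations integrates a
determinant row by row, so `𝔥_N(x) = det (h_j(x_i))`. On the other hand `e^{tL}` acts on
`(h_0, …, h_{N-1})` by the exponential of `t` times the shift, which is unitriangular, and the
Cauchy–Binet formula turns this into the harmonicity of `𝔥_N`.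

The action of `e^{tL}` on `h_j` is computed under the contour integral. The contour may be enlarged
to `|w| > 2M`, where `|h_j(n) / p_n(w)|` decays geometrically; telescoping against `1 / p_n(w)` then
gives `∑_y ψ_y(w) h_j(y) / λ(y) = (-w)^{-(j+1)}`, and Cauchy's formula finishes the computation.
-/

section InfiniteSums

lemma hasSum_sub_of_summable {G : Type*} [AddCommGroup G] [TopologicalSpace G]
    [IsTopologicalAddGroup G] {f : ℕ → G} (hf : Summable f) :
    HasSum (fun n => f (n + 1) - f n) (-f 0) := by
  simpa using ((hasSum_nat_add_iff' 1).2 hf.hasSum).sub hf.hasSum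

lemma summable_choose_mul_geometric {q : ℝ} (hq0 : 0 ≤ q) (hq1 : q < 1) (j : ℕ) :
    Summable fun n : ℕ => (n.choose j : ℝ) * q ^ n := by
  rw [← summable_nat_add_iff j]
  refine ((summable_choose_mul_geometric_of_norm_lt_one j
    (by rwa [Real.norm_of_nonneg hq0])).mul_left (q ^ j)).congr fun n => ?_
  ring

lemma hasSum_mul_prod {𝕜 ι κ : Type*} [RCLike 𝕜] {f : ι → 𝕜} {g : κ → 𝕜} {a b : 𝕜}
    (hf : HasSum f a) (hg : HasSum g b) :
    HasSum (fun p : ι × κ => f p.1 * g p.2) (a * b) :=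
  hf.mul hg (summable_mul_of_summable_norm hf.summable.norm hg.summable.norm)

lemma hasSum_prod_pi {𝕜 ι : Type*} [RCLike 𝕜] {n : ℕ} {f : Fin n → ι → 𝕜} {a : Fin n → 𝕜}
    (hf : ∀ i, HasSum (f i) (a i)) :
    HasSum (fun y : Fin n → ι => ∏ i, f i (y i)) (∏ i, a i) := by
  induction n with
  | zero => simp
  | succ n ih =>
    rw [Fin.prod_univ_succ, ← (Fin.consEquiv fun _ : Fin (n + 1) => ι).hasSum_iff]
    refine (hasSum_mul_prod (hf 0) (ih fun i => hf i.succ)).congr_fun fun p => ?_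
    simp [Fin.prod_univ_succ, Fin.consEquiv]

lemma hasSum_circleIntegral {ι E : Type*} [Countable ι] [NormedAddCommGroup E] [NormedSpace ℂ E]
    [CompleteSpace E] {F : ι → ℂ → E} {c : ℂ} {R : ℝ} {u : ι → ℝ} (hR : 0 ≤ R)
    (hF : ∀ i, ContinuousOn (F i) (Metric.sphere c R)) (hu : Summable u)
    (hFu : ∀ i, ∀ w ∈ Metric.sphere c R, ‖F i w‖ ≤ u i) :
    HasSum (fun i => ∮ w in C(c, R), F i w) (∮ w in C(c, R), ∑' i, F i w) := by
  have hlim := (tendstoUniformlyOn_tsum hu hFu).tendsto_circleIntegral_of_continuousOn hR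
    (.of_forall fun s => continuousOn_finsetSum s fun i _ => hF i)
  exact hlim.congr fun s => circleIntegral.integral_fun_sum fun i _ => (hF i).circleIntegrable hR

end InfiniteSums

section Determinants

lemma det_sum_smul_rows {R κ : Type*} [CommRing R] {n : ℕ} (s : Fin n → Finset κ) (c : κ → R)
    (f : κ → Fin n → R) :
    (Matrix.of fun i j => ∑ y ∈ s i, c y * f y j).det =
      ∑ y ∈ Fintype.piFinset s, (∏ i, c (y i)) * (Matrix.of fun i j => f (y i) j).det := by
  have hrows : (Matrix.of fun i j => ∑ y ∈ s i, c y * f y j) =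
      fun i => ∑ y ∈ s i, c y • f y := by
    ext i j
    simp [Finset.sum_apply]
  calc _ = ∑ y ∈ Fintype.piFinset s, (Matrix.of fun i j => c (y i) * f (y i) j).det := by
        rw [hrows]
        exact Matrix.detRowAlternating.toMultilinearMap.map_sum_finset (fun _ y => c y • f y) s
    _ = _ := Finset.sum_congr rfl fun y _ => Matrix.det_mul_column (fun i => c (y i)) _

lemma det_eq_det_sub_of_column_zero_eq_one {R : Type*} [CommRing R] {n : ℕ}
    {A : Matrix (Fin (n + 1)) (Fin (n + 1)) R} (hA : ∀ i, A i 0 = 1) :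
    A.det = (Matrix.of fun i j : Fin n => A i.succ j.succ - A i.castSucc j.succ).det := by
  let B : Matrix (Fin (n + 1)) (Fin (n + 1)) R :=
    Matrix.of (Fin.cons (A 0) fun i => A i.succ - A i.castSucc)
  have hAB : A.det = B.det :=
    Matrix.det_eq_of_forall_row_eq_smul_add_pred (fun _ => 1) (fun j => rfl)
      fun i j => by simp [B]
  have hcol : ∀ i : Fin n, B i.succ 0 = 0 := fun i => by simp [B, hA]
  rw [hAB, Matrix.det_succ_column_zero, Fin.sum_univ_succ]
  simp only [hcol, mul_zero, zero_mul, Finset.sum_const_zero, add_zero]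
  rw [show B 0 0 = 1 from hA 0, Fin.val_zero, pow_zero, one_mul, one_mul]
  rfl

lemma hasSum_det_mul_prod {𝕜 ι : Type*} [RCLike 𝕜] {n : ℕ} {a : Fin n → ι → 𝕜} {b : ι → Fin n → 𝕜}
    {c : Matrix (Fin n) (Fin n) 𝕜} (h : ∀ i j, HasSum (fun y => a i y * b y j) (c i j)) :
    HasSum (fun y : Fin n → ι => (Matrix.of fun i j => a i (y j)).det * ∏ j, b (y j) j) c.det := by
  simp only [Matrix.det_apply', Finset.sum_mul, Matrix.of_apply]
  refine hasSum_sum fun σ _ => ?_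
  have hσ := (hasSum_prod_pi fun j => h (σ j) j).mul_left ((Equiv.Perm.sign σ : ℤ) : 𝕜)
  simpa only [Finset.prod_mul_distrib, mul_assoc] using hσ

lemma sum_perm_det_mul_prod {R ι : Type*} [CommRing R] {n : ℕ} (a : Fin n → ι → R)
    (b : ι → Fin n → R) (y : Fin n → ι) :
    ∑ σ : Equiv.Perm (Fin n), (Matrix.of fun i j => a i (y (σ j))).det * ∏ j, b (y (σ j)) j =
      (Matrix.of fun i j => a i (y j)).det * (Matrix.of fun i j => b (y i) j).det := by
  rw [Matrix.det_apply' (Matrix.of fun i j => b (y i) j), Finset.mul_sum]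
  refine Finset.sum_congr rfl fun σ _ => ?_
  have hσ : (Matrix.of fun i j => a i (y (σ j))).det = _ :=
    Matrix.det_permute' σ (Matrix.of fun i j => a i (y j))
  simp only [hσ, Matrix.of_apply]
  ring

variable {κ : Type*} [LinearOrder κ] {n : ℕ}

lemma injective_strictMono_comp_perm :
    Function.Injective
      fun p : {y : Fin n → κ // StrictMono y} × Equiv.Perm (Fin n) => p.1.1 ∘ p.2 := by
  rintro ⟨⟨y, hy⟩, σ⟩ ⟨⟨z, hz⟩, τ⟩ (h : y ∘ σ = z ∘ τ)
  obtain rfl : y = z := (hy.range_inj hz).1 <| by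
    rw [← σ.surjective.range_comp y, h, τ.surjective.range_comp]
  obtain rfl : σ = τ := Equiv.ext fun i => hy.injective (congrFun h i)
  rfl

lemma exists_strictMono_comp_perm_eq {y : Fin n → κ} (hy : Function.Injective y) :
    ∃ p : {z : Fin n → κ // StrictMono z} × Equiv.Perm (Fin n), p.1.1 ∘ p.2 = y :=
  ⟨(⟨y ∘ Tuple.sort y, (Tuple.monotone_sort y).strictMono_of_injective
    (hy.comp (Tuple.sort y).injective)⟩, (Tuple.sort y)⁻¹), by ext i; simp⟩

variable {𝕜 : Type*} [RCLike 𝕜] {a : Fin n → κ → 𝕜} {b : κ → Fin n → 𝕜}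

/-- Cauchy–Binet for absolutely convergent infinite matrix products: expand the determinant of the
product over all tuples, then group the injective ones by their increasing rearrangement. -/
theorem hasSum_det_mul_det {c : Matrix (Fin n) (Fin n) 𝕜}
    (h : ∀ i j, HasSum (fun y => a i y * b y j) (c i j)) :
    HasSum (fun y : {y : Fin n → κ // StrictMono y} =>
      (Matrix.of fun i j => a i (y.1 j)).det * (Matrix.of fun i j => b (y.1 i) j).det) c.det := by
  have hvanish : ∀ y : Fin n → κ, y ∉ Set.range
      (fun p : {y : Fin n → κ // StrictMono y} × Equiv.Perm (Fin n) => p.1.1 ∘ p.2) →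
      (Matrix.of fun i j => a i (y j)).det * ∏ j, b (y j) j = 0 := by
    intro y hy
    obtain ⟨i, j, hij, hne⟩ : ∃ i j, y i = y j ∧ i ≠ j := by
      simpa [Function.Injective] using mt exists_strictMono_comp_perm_eq hy
    rw [Matrix.det_zero_of_column_eq hne fun k => by simp [hij], zero_mul]
  have hsum := (injective_strictMono_comp_perm.hasSum_iff hvanish).2 (hasSum_det_mul_prod h)
  convert hsum.prod_fiberwise fun y => hasSum_fintype _ using 2 with y
  exact (sum_perm_det_mul_prod a b y.1).symm

end Determinants

/-- `iterAntideriv lam j` is the `j`-th iterated antiderivative of `1` for the generator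
`L f = λ (f (· + 1) - f)`, normalised to vanish at `0` when `j ≥ 1`. Its value at `x` is the
elementary symmetric function of degree `j` of `λ(0)⁻¹, …, λ(x - 1)⁻¹`. -/
noncomputable def iterAntideriv (lam : ℕ → ℝ) : ℕ → ℕ → ℝ
  | 0, _ => 1
  | j + 1, x => ∑ y ∈ Finset.range x, (lam y)⁻¹ * iterAntideriv lam j y

section IterAntideriv

variable {lam : ℕ → ℝ}

@[simp]
lemma iterAntideriv_zero_left (x : ℕ) : iterAntideriv lam 0 x = 1 := by
  rw [iterAntideriv]

@[simp]
lemma iterAntideriv_succ_zero (j : ℕ) : iterAntideriv lam (j + 1) 0 = 0 := by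
  simp [iterAntideriv]

lemma iterAntideriv_succ_succ (j x : ℕ) :
    iterAntideriv lam (j + 1) (x + 1) =
      iterAntideriv lam (j + 1) x + (lam x)⁻¹ * iterAntideriv lam j x := by
  simp only [iterAntideriv, Finset.sum_range_succ]

lemma iterAntideriv_sub_eq_sum_Ico (j : ℕ) {a b : ℕ} (h : a ≤ b) :
    iterAntideriv lam (j + 1) b - iterAntideriv lam (j + 1) a =
      ∑ y ∈ Finset.Ico a b, (lam y)⁻¹ * iterAntideriv lam j y := by
  rw [Finset.sum_Ico_eq_sub _ h, iterAntideriv, iterAntideriv]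

lemma pF_succ (x : ℕ) (w : ℂ) :
    pF lam (x + 1) w = pF lam x w * (((lam x : ℂ) - w) / lam x) :=
  Finset.prod_range_succ _ _

lemma pF_eq_sum (h0 : ∀ k, lam k ≠ 0) (w : ℂ) {x n : ℕ} (hxn : x < n) :
    pF lam x w = ∑ i ∈ Finset.range n, (iterAntideriv lam i x : ℂ) * (-w) ^ i := by
  obtain ⟨n, rfl⟩ := Nat.exists_eq_add_one_of_ne_zero (Nat.ne_zero_of_lt hxn)
  induction x generalizing n with
  | zero => simp [pF, Finset.sum_range_succ']
  | succ x ih =>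
    obtain ⟨n, rfl⟩ := Nat.exists_eq_add_one_of_ne_zero (show n ≠ 0 by omega)
    have hx : (lam x : ℂ) ≠ 0 := mod_cast h0 x
    have hrec : pF lam (x + 1) w = pF lam x w + -w * (lam x : ℂ)⁻¹ * pF lam x w := by
      rw [pF_succ]
      field_simp
      ring
    rw [hrec]
    nth_rw 1 [ih (n + 1) (by omega)]
    rw [ih n (by omega), Finset.sum_range_succ', Finset.sum_range_succ' _ (n + 1), Finset.mul_sum,
      add_right_comm, ← Finset.sum_add_distrib]
    congr 1
    refine Finset.sum_congr rfl fun i _ => ?_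
    rw [iterAntideriv_succ_succ]
    push_cast
    ring

end IterAntideriv

section Positivity

variable {lam : ℕ → ℝ} {N : ℕ}

lemma interlace_iff_mem_piFinset {y : Fin N → ℕ} {x : Fin (N + 1) → ℕ} :
    Interlace y x ↔
      y ∈ Fintype.piFinset fun i : Fin N => Finset.Ico (x i.castSucc) (x i.succ) := by
  simp [Interlace, Fintype.mem_piFinset]

lemma Interlace.strictMono {y : Fin N → ℕ} {x : Fin (N + 1) → ℕ} (h : Interlace y x) :
    StrictMono y := by
  cases N with
  | zero => exact Subsingleton.strictMono y
  | succ N =>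
    refine Fin.strictMono_iff_lt_succ.2 fun i => ?_
    calc y i.castSucc < x i.castSucc.succ := (h i.castSucc).2
      _ ≤ y i.succ := (h i.succ).1

lemma hfun_succ_eq_sum (x : Fin (N + 1) → ℕ) :
    hfun lam (N + 1) x =
      ∑ y ∈ Fintype.piFinset fun i : Fin N => Finset.Ico (x i.castSucc) (x i.succ),
        (∏ i, (lam (y i))⁻¹) * hfun lam N y := by
  rw [hfun, ← Finset.tsum_subtype]
  exact (Equiv.subtypeEquivRight fun y => interlace_iff_mem_piFinset).tsum_eq
    fun y : {y // y ∈ Fintype.piFinset fun i : Fin N => Finset.Ico (x i.castSucc) (x i.succ)} =>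
      (∏ i, (lam (y.1 i))⁻¹) * hfun lam N y.1

lemma hfun_pos (hpos : ∀ k, 0 < lam k) {x : Fin N → ℕ} (hx : StrictMono x) :
    0 < hfun lam N x := by
  induction N with
  | zero => simp [hfun]
  | succ N ih =>
    rw [hfun_succ_eq_sum]
    refine Finset.sum_pos (fun y hy => ?_) ⟨fun i => x i.castSucc, ?_⟩
    · exact mul_pos (Finset.prod_pos fun i _ => inv_pos.2 (hpos _))
        (ih (interlace_iff_mem_piFinset.2 hy).strictMono)
    · simpa [Fintype.mem_piFinset] using fun i : Fin N => hx i.castSucc_lt_succ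

theorem hfun_eq_det {x : Fin N → ℕ} (hx : StrictMono x) :
    hfun lam N x = (Matrix.of fun i j : Fin N => iterAntideriv lam j (x i)).det := by
  induction N with
  | zero => simp [hfun]
  | succ N ih =>
    calc hfun lam (N + 1) x
        = ∑ y ∈ Fintype.piFinset fun i : Fin N => Finset.Ico (x i.castSucc) (x i.succ),
          (∏ i, (lam (y i))⁻¹) * (Matrix.of fun i j : Fin N => iterAntideriv lam j (y i)).det := by
          rw [hfun_succ_eq_sum]
          refine Finset.sum_congr rfl fun y hy => ?_
          rw [ih (interlace_iff_mem_piFinset.2 hy).strictMono]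
      _ = (Matrix.of fun i j : Fin N => ∑ y ∈ Finset.Ico (x i.castSucc) (x i.succ),
            (lam y)⁻¹ * iterAntideriv lam j y).det :=
          (det_sum_smul_rows _ (fun y => (lam y)⁻¹) fun y j => iterAntideriv lam j y).symm
      _ = (Matrix.of fun i j : Fin N => iterAntideriv lam (j + 1) (x i.succ) -
            iterAntideriv lam (j + 1) (x i.castSucc)).det := by
          congr 1
          ext i j
          exact (iterAntideriv_sub_eq_sum_Ico j (hx i.castSucc_lt_succ).le).symm
      _ = _ := (det_eq_det_sub_of_column_zero_eq_one
          (A := Matrix.of fun i j : Fin (N + 1) => iterAntideriv lam j (x i))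
          fun i => by simp).symm

end Positivity

section Resolvent

variable {lam : ℕ → ℝ} {M : ℝ} {w : ℂ}

lemma sub_norm_le_norm_sub (hM : ∀ k, |lam k| ≤ M) (w : ℂ) (k : ℕ) :
    ‖w‖ - M ≤ ‖(lam k : ℂ) - w‖ := by
  have htri : ‖w‖ - ‖(lam k : ℂ)‖ ≤ ‖(lam k : ℂ) - w‖ := norm_sub_rev w _ ▸ norm_sub_norm_le _ _
  have hk := hM k
  rw [Complex.norm_real, Real.norm_eq_abs] at htri
  linarith

lemma ofReal_sub_ne_zero (hM : ∀ k, |lam k| ≤ M) (hw : M < ‖w‖) (k : ℕ) :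
    (lam k : ℂ) - w ≠ 0 :=
  norm_pos_iff.1 ((sub_pos.2 hw).trans_le (sub_norm_le_norm_sub hM w k))

lemma psiF_div (h0 : ∀ k, lam k ≠ 0) (y : ℕ) (w : ℂ) :
    psiF lam y w / lam y = (pF lam y w)⁻¹ / (lam y - w) := by
  have hy : (lam y : ℂ) ≠ 0 := mod_cast h0 y
  simp only [psiF, pF, Finset.prod_range_succ, ← Finset.prod_inv_distrib, inv_div]
  field_simp

lemma one_div_pF_succ (n : ℕ) (w : ℂ) :
    1 / pF lam (n + 1) w = lam n / (lam n - w) * (1 / pF lam n w) := by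
  rw [pF_succ, ← div_div, div_div_eq_mul_div]
  ring

lemma iterAntideriv_div_pF_succ (h0 : ∀ k, lam k ≠ 0) (w : ℂ) (j n : ℕ) :
    (iterAntideriv lam (j + 1) (n + 1) : ℂ) / pF lam (n + 1) w =
      lam n / (lam n - w) * (iterAntideriv lam (j + 1) n / pF lam n w) +
        (lam n - w)⁻¹ * (iterAntideriv lam j n / pF lam n w) := by
  have hn : (lam n : ℂ) ≠ 0 := mod_cast h0 n
  rw [iterAntideriv_succ_succ, ← one_div_mul_eq_div (pF lam (n + 1) w), one_div_pF_succ]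
  push_cast
  field_simp

lemma one_div_pF_succ_sub (h0 : ∀ k, lam k ≠ 0) {n : ℕ} (hn : (lam n : ℂ) - w ≠ 0) :
    1 / pF lam (n + 1) w - 1 / pF lam n w = w * (psiF lam n w / lam n) := by
  rw [one_div_pF_succ, psiF_div h0]
  field_simp
  ring

lemma iterAntideriv_div_pF_succ_sub (h0 : ∀ k, lam k ≠ 0) {n : ℕ} (hn : (lam n : ℂ) - w ≠ 0)
    (j : ℕ) :
    (iterAntideriv lam (j + 1) (n + 1) : ℂ) / pF lam (n + 1) w -
        iterAntideriv lam (j + 1) n / pF lam n w =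
      psiF lam n w / lam n * iterAntideriv lam j n +
        w * (psiF lam n w / lam n * iterAntideriv lam (j + 1) n) := by
  rw [iterAntideriv_div_pF_succ h0, psiF_div h0]
  field_simp
  ring

lemma norm_ofReal_div_sub_le (hM : ∀ k, |lam k| ≤ M) (hw : M < ‖w‖) (k : ℕ) :
    ‖(lam k : ℂ) / (lam k - w)‖ ≤ M / (‖w‖ - M) := by
  rw [norm_div, Complex.norm_real, Real.norm_eq_abs]
  exact div_le_div₀ ((abs_nonneg _).trans (hM k)) (hM k) (sub_pos.2 hw)
    (sub_norm_le_norm_sub hM w k)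

lemma norm_inv_ofReal_sub_le (hM : ∀ k, |lam k| ≤ M) (hw : M < ‖w‖) (k : ℕ) :
    ‖((lam k : ℂ) - w)⁻¹‖ ≤ (‖w‖ - M)⁻¹ := by
  rw [norm_inv]
  exact inv_anti₀ (sub_pos.2 hw) (sub_norm_le_norm_sub hM w k)

/-- Both terms of the recursion in `n` gain a factor at most `q = M / (‖w‖ - M)`, so the bound
propagates by Pascal's rule. -/
lemma norm_iterAntideriv_div_pF_le (h0 : ∀ k, lam k ≠ 0) (hM : ∀ k, |lam k| ≤ M)
    (hw : M < ‖w‖) (j n : ℕ) :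
    ‖(iterAntideriv lam j n : ℂ) / pF lam n w‖ ≤
      (M ^ j)⁻¹ * (n.choose j * (M / (‖w‖ - M)) ^ n) := by
  have hM0 : 0 < M := (abs_pos.2 (h0 0)).trans_le (hM 0)
  have hδ : 0 < ‖w‖ - M := sub_pos.2 hw
  have hratio := norm_ofReal_div_sub_le hM hw
  have hinv := norm_inv_ofReal_sub_le hM hw
  have hδq : (‖w‖ - M)⁻¹ = M⁻¹ * (M / (‖w‖ - M)) := by field_simp
  rw [hδq] at hinv
  set q := M / (‖w‖ - M)
  induction n generalizing j with
  | zero => cases j <;> simp [pF]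
  | succ n ih =>
    cases j with
    | zero =>
      have ih0 := ih 0
      simp only [iterAntideriv_zero_left, Complex.ofReal_one, Nat.choose_zero_right, Nat.cast_one,
        pow_zero, inv_one, one_mul] at ih0 ⊢
      rw [one_div_pF_succ, norm_mul, pow_succ']
      exact mul_le_mul (hratio n) ih0 (norm_nonneg _) (by positivity)
    | succ j =>
      rw [iterAntideriv_div_pF_succ h0]
      calc _ ≤ q * ((M ^ (j + 1))⁻¹ * (n.choose (j + 1) * q ^ n)) +
            M⁻¹ * q * ((M ^ j)⁻¹ * (n.choose j * q ^ n)) := by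
            refine (norm_add_le _ _).trans ?_
            rw [norm_mul, norm_mul]
            gcongr
            exacts [hratio n, ih (j + 1), hinv n, ih j]
        _ = _ := by
            rw [Nat.choose_succ_succ]
            push_cast
            ring

lemma norm_psiF_div_mul_iterAntideriv_le (h0 : ∀ k, lam k ≠ 0) (hM : ∀ k, |lam k| ≤ M)
    (hw : M < ‖w‖) (j y : ℕ) :
    ‖psiF lam y w / lam y * iterAntideriv lam j y‖ ≤
      (‖w‖ - M)⁻¹ * ((M ^ j)⁻¹ * (y.choose j * (M / (‖w‖ - M)) ^ y)) := by
  rw [psiF_div h0, show (pF lam y w)⁻¹ / (lam y - w) * iterAntideriv lam j y =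
    (lam y - w)⁻¹ * (iterAntideriv lam j y / pF lam y w) by ring, norm_mul, norm_inv]
  gcongr
  exacts [sub_norm_le_norm_sub hM w y, norm_iterAntideriv_div_pF_le h0 hM hw j y]

lemma summable_choose_mul_pow_of_two_mul_lt {r : ℝ} (hM0 : 0 ≤ M) (hr : 2 * M < r) (j : ℕ) :
    Summable fun n : ℕ => (M ^ j)⁻¹ * (n.choose j * (M / (r - M)) ^ n) := by
  have hδ : 0 < r - M := by linarith
  exact (summable_choose_mul_geometric (by positivity)
    ((div_lt_one hδ).2 (by linarith)) j).mul_left _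

/-- Summation by parts against `1 / p_n(w)`: the `j`-th series is `-w⁻¹` times the previous one. -/
lemma hasSum_psiF_div_mul_iterAntideriv (h0 : ∀ k, lam k ≠ 0) (hM : ∀ k, |lam k| ≤ M)
    (hw : 2 * M < ‖w‖) (j : ℕ) :
    HasSum (fun y => psiF lam y w / lam y * iterAntideriv lam j y) ((-w) ^ (j + 1))⁻¹ := by
  have hM0 : 0 < M := (abs_pos.2 (h0 0)).trans_le (hM 0)
  have hMw : M < ‖w‖ := by linarith
  have hw0 : w ≠ 0 := norm_pos_iff.1 (hM0.trans hMw)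
  have hbdd := summable_choose_mul_pow_of_two_mul_lt hM0.le hw
  have htele (j : ℕ) := hasSum_sub_of_summable
    (.of_norm_bounded (hbdd j) (norm_iterAntideriv_div_pF_le h0 hM hMw j))
  have hne := ofReal_sub_ne_zero hM hMw
  induction j with
  | zero =>
    have hzero := (htele 0).mul_left w⁻¹
    simp only [iterAntideriv_zero_left, Complex.ofReal_one, one_div_pF_succ_sub h0 (hne _),
      inv_mul_cancel_left₀ hw0] at hzero
    simpa [pF, inv_neg] using hzero
  | succ j ih =>
    have hsucc := ((htele (j + 1)).sub ih).mul_left w⁻¹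
    simp only [iterAntideriv_div_pF_succ_sub h0 (hne _), add_sub_cancel_left,
      inv_mul_cancel_left₀ hw0] at hsucc
    have hpow : ((-w) ^ (j + 1 + 1))⁻¹ = -(w⁻¹ * ((-w) ^ (j + 1))⁻¹) := by
      rw [pow_succ' (-w) (j + 1), mul_inv, inv_neg, neg_mul]
    simpa [hpow] using hsucc

end Resolvent

section Semigroup

lemma neg_two_pi_I_inv_mul_circleIntegral_exp_div_pow {R : ℝ} (hR : 0 < R) (t : ℂ) (m : ℕ) :
    -((2 * (Real.pi : ℂ) * Complex.I)⁻¹ *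
      ∮ w in C(0, R), Complex.exp (-t * w) / (-w) ^ (m + 1)) = t ^ m / m.factorial := by
  have hcauchy := (show Differentiable ℂ fun w => Complex.exp (-t * w) by fun_prop).diffContOnCl
    |>.circleIntegral_one_div_sub_center_pow_smul (c := 0) hR m
  have hsign (w : ℂ) : Complex.exp (-t * w) / (-w) ^ (m + 1) =
      (-1) ^ (m + 1) * ((1 / (w - 0) ^ (m + 1)) • Complex.exp (-t * w)) := by
    rw [neg_pow w, sub_zero, smul_eq_mul, ← div_div, div_eq_mul_inv _ ((-1 : ℂ) ^ (m + 1)),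
      ← inv_pow, inv_neg_one]
    ring
  simp only [hsign]
  rw [circleIntegral.integral_const_mul, hcauchy, iteratedDeriv_cexp_const_mul]
  simp only [smul_eq_mul, mul_zero, Complex.exp_zero, mul_one]
  rw [neg_pow t]
  field_simp
  simp [pow_succ, ← mul_pow]

lemma circleIntegral_pow_mul_exp {R : ℝ} (hR : 0 ≤ R) (t : ℂ) (m : ℕ) :
    (∮ w in C(0, R), (-w) ^ m * Complex.exp (-t * w)) = 0 :=
  (Differentiable.diffContOnCl (by fun_prop)).circleIntegral_eq_zero hR

/-- The matrix of the semigroup `e^{tL}` in the basis of iterated antiderivatives of `1`: since `L`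
sends each of them to the preceding one, it is the exponential of `t` times the shift. -/
noncomputable def expShift (t : ℂ) (i j : ℕ) : ℂ :=
  if i ≤ j then t ^ (j - i) / (j - i).factorial else 0

lemma expShift_eq_zero_of_lt (t : ℂ) {i j : ℕ} (h : j < i) : expShift t i j = 0 :=
  if_neg h.not_ge

lemma det_expShift (t : ℂ) (N : ℕ) :
    (Matrix.of fun i j : Fin N => expShift t i j).det = 1 := by
  have hE : (Matrix.of fun i j : Fin N => expShift t i j).IsUpperTriangular :=
    fun i j hij => expShift_eq_zero_of_lt t hij
  rw [Matrix.det_of_isUpperTriangular hE]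
  exact Finset.prod_eq_one fun i _ => by simp [expShift]

lemma neg_two_pi_I_inv_mul_circleIntegral_eq_expShift {R : ℝ} (hR : 0 < R) (t : ℂ) (i j : ℕ) :
    -((2 * (Real.pi : ℂ) * Complex.I)⁻¹ *
      ∮ w in C(0, R), (-w) ^ i * Complex.exp (-t * w) * ((-w) ^ (j + 1))⁻¹) = expShift t i j := by
  have hw0 (w : ℂ) (hw : w ∈ Metric.sphere 0 R) : -w ≠ 0 :=
    neg_ne_zero.2 (ne_zero_of_mem_sphere hR.ne' ⟨w, hw⟩)
  rcases le_or_gt i j with hij | hji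
  · obtain ⟨m, rfl⟩ := Nat.exists_eq_add_of_le hij
    rw [circleIntegral.integral_congr (g := fun w => Complex.exp (-t * w) / (-w) ^ (m + 1)) hR.le,
      neg_two_pi_I_inv_mul_circleIntegral_exp_div_pow hR]
    · simp [expShift]
    · intro w hw
      have := hw0 w hw
      simp only [add_assoc, pow_add (-w) i]
      field_simp
  · obtain ⟨m, rfl⟩ := Nat.exists_eq_add_of_lt hji
    rw [circleIntegral.integral_congr (g := fun w => (-w) ^ m * Complex.exp (-t * w)) hR.le,
      circleIntegral_pow_mul_exp hR.le, expShift_eq_zero_of_lt t hji, mul_zero, neg_zero]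
    intro w hw
    have := hw0 w hw
    simp only [add_right_comm j m 1, pow_add (-w) (j + 1)]
    field_simp

variable {lam : ℕ → ℝ} {M R : ℝ}

lemma differentiableAt_psiF (hM : ∀ k, |lam k| ≤ M) (y : ℕ) {w : ℂ} (hw : M < ‖w‖) :
    DifferentiableAt ℂ (psiF lam y) w := by
  unfold psiF
  refine DifferentiableAt.fun_finsetProd fun k _ => ?_
  have := ofReal_sub_ne_zero hM hw k
  fun_prop (disch := assumption)

lemma differentiable_pF (lam : ℕ → ℝ) (x : ℕ) : Differentiable ℂ (pF lam x) := by
  unfold pF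
  fun_prop

lemma eL_eq_eL_of_le (hM : ∀ k, |lam k| ≤ M) {R' : ℝ} (hR : M < R) (hRR' : R ≤ R') (t : ℝ)
    (x y : ℕ) : eL lam R t x y = eL lam R' t x y := by
  have hR0 : 0 < R := ((abs_nonneg _).trans (hM 0)).trans_lt hR
  have hdiff (w : ℂ) (hw : R ≤ ‖w‖) : DifferentiableAt ℂ
      (fun w => psiF lam y w * pF lam x w * Complex.exp (-(t : ℂ) * w)) w := by
    have hψ := differentiableAt_psiF hM y (hR.trans_le hw)
    have hp := differentiable_pF lam x w
    fun_prop
  rw [eL, eL, Complex.circleIntegral_eq_of_differentiable_on_annulus_off_countable hR0 hRR'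
    Set.countable_empty]
  · exact fun w hw => (hdiff w (by simpa using hw.2)).continuousAt.continuousWithinAt
  · exact fun w hw => hdiff w (by simpa using (not_le.1 (mt Metric.mem_closedBall.2 hw.1.2)).le)

lemma eL_mul_eq (R t : ℝ) (x y : ℕ) (a : ℂ) :
    eL lam R t x y * a = -((2 * (Real.pi : ℂ) * Complex.I)⁻¹ *
      ∮ w in C(0, R), pF lam x w * Complex.exp (-(t : ℂ) * w) * (psiF lam y w / lam y * a)) := by
  have hint (w : ℂ) : pF lam x w * Complex.exp (-(t : ℂ) * w) * (psiF lam y w / lam y * a) =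
      1 / lam y * a * (psiF lam y w * pF lam x w * Complex.exp (-(t : ℂ) * w)) := by ring
  simp only [hint]
  rw [circleIntegral.integral_const_mul, eL]
  ring

lemma neg_two_pi_I_inv_mul_circleIntegral_pF (h0 : ∀ k, lam k ≠ 0) (hR : 0 < R) (t : ℂ) (x : ℕ)
    {j n : ℕ} (hjn : j < n) :
    -((2 * (Real.pi : ℂ) * Complex.I)⁻¹ *
      ∮ w in C(0, R), pF lam x w * Complex.exp (-t * w) * ((-w) ^ (j + 1))⁻¹) =
      ∑ i ∈ Finset.range n, (iterAntideriv lam i x : ℂ) * expShift t i j := by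
  have hexpand (w : ℂ) : pF lam x w * Complex.exp (-t * w) * ((-w) ^ (j + 1))⁻¹ =
      ∑ i ∈ Finset.range (n + (x + 1)), (iterAntideriv lam i x : ℂ) *
        ((-w) ^ i * Complex.exp (-t * w) * ((-w) ^ (j + 1))⁻¹) := by
    simp only [pF_eq_sum h0 w (show x < n + (x + 1) by omega), Finset.sum_mul, mul_assoc]
  have hint : ∀ i ∈ Finset.range (n + (x + 1)), CircleIntegrable (fun w =>
      (iterAntideriv lam i x : ℂ) *
        ((-w) ^ i * Complex.exp (-t * w) * ((-w) ^ (j + 1))⁻¹)) 0 R := by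
    refine fun i _ => ContinuousOn.circleIntegrable hR.le ?_
    have : ∀ w ∈ Metric.sphere (0 : ℂ) R, (-w) ^ (j + 1) ≠ 0 := fun w hw =>
      pow_ne_zero _ (neg_ne_zero.2 (ne_zero_of_mem_sphere hR.ne' ⟨w, hw⟩))
    fun_prop (disch := assumption)
  have htail (k : ℕ) : expShift t (n + k) j = 0 := expShift_eq_zero_of_lt t (by omega)
  simp only [hexpand]
  rw [circleIntegral.integral_fun_sum hint, Finset.mul_sum, ← Finset.sum_neg_distrib]
  simp only [circleIntegral.integral_const_mul, mul_left_comm _ (iterAntideriv lam _ x : ℂ),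
    ← mul_neg, neg_two_pi_I_inv_mul_circleIntegral_eq_expShift hR]
  simp [Finset.sum_range_add, htail]

lemma hasSum_circleIntegral_mul_psiF (h0 : ∀ k, lam k ≠ 0) (hM : ∀ k, |lam k| ≤ M)
    (hR : 2 * M < R) {G : ℂ → ℂ} (hG : ContinuousOn G (Metric.sphere 0 R)) (j : ℕ) :
    HasSum (fun y => ∮ w in C(0, R), G w * (psiF lam y w / lam y * iterAntideriv lam j y))
      (∮ w in C(0, R), G w * ((-w) ^ (j + 1))⁻¹) := by
  have hM0 : 0 < M := (abs_pos.2 (h0 0)).trans_le (hM 0)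
  have hMR : M < R := by linarith
  have hR0 : 0 < R := hM0.trans hMR
  have hnorm (w : ℂ) (hw : w ∈ Metric.sphere 0 R) : ‖w‖ = R := by simpa using hw
  obtain ⟨C, hC⟩ := (isCompact_sphere (0 : ℂ) R).exists_bound_of_continuousOn hG
  have hcont (y : ℕ) : ContinuousOn
      (fun w => G w * (psiF lam y w / lam y * iterAntideriv lam j y)) (Metric.sphere 0 R) := by
    have hψ : ContinuousOn (psiF lam y) (Metric.sphere 0 R) := fun w hw =>
      (differentiableAt_psiF hM y (by rwa [hnorm w hw])).continuousAt.continuousWithinAt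
    fun_prop
  have hbound (y : ℕ) (w : ℂ) (hw : w ∈ Metric.sphere 0 R) :
      ‖G w * (psiF lam y w / lam y * iterAntideriv lam j y)‖ ≤
        C * ((R - M)⁻¹ * ((M ^ j)⁻¹ * (y.choose j * (M / (R - M)) ^ y))) := by
    have hψ := norm_psiF_div_mul_iterAntideriv_le h0 hM (by rwa [hnorm w hw]) j y
    rw [hnorm w hw] at hψ
    rw [norm_mul]
    exact mul_le_mul (hC w hw) hψ (norm_nonneg _) ((norm_nonneg _).trans (hC w hw))
  have hlim := hasSum_circleIntegral hR0.le hcont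
    (((summable_choose_mul_pow_of_two_mul_lt hM0.le hR j).mul_left _).mul_left C) hbound
  rwa [circleIntegral.integral_congr hR0.le fun w hw => ((hasSum_psiF_div_mul_iterAntideriv h0 hM
    (by rwa [hnorm w hw]) j).mul_left (G w)).tsum_eq] at hlim

theorem hasSum_eL_mul_iterAntideriv (h0 : ∀ k, lam k ≠ 0) (hM : ∀ k, |lam k| ≤ M)
    (hR : M < R) (t : ℝ) (x : ℕ) {j n : ℕ} (hjn : j < n) :
    HasSum (fun y => eL lam R t x y * iterAntideriv lam j y)
      (∑ i ∈ Finset.range n, (iterAntideriv lam i x : ℂ) * expShift t i j) := by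
  have hM0 : 0 < M := (abs_pos.2 (h0 0)).trans_le (hM 0)
  wlog hR2 : 2 * M < R generalizing R
  · simpa only [eL_eq_eL_of_le hM hR (show R ≤ R + M by linarith)] using
      this (R := R + M) (by linarith) (by linarith)
  have hG : Continuous fun w => pF lam x w * Complex.exp (-(t : ℂ) * w) := by
    have := (differentiable_pF lam x).continuous
    fun_prop
  simp only [eL_mul_eq, ← neg_two_pi_I_inv_mul_circleIntegral_pF h0 (hM0.trans hR) t x hjn]
  exact ((hasSum_circleIntegral_mul_psiF h0 hM hR2 hG.continuousOn j).mul_left _).neg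

theorem hasSum_det_eL_mul_hfun (h0 : ∀ k, lam k ≠ 0) (hM : ∀ k, |lam k| ≤ M) (hR : M < R)
    (t : ℝ) {N : ℕ} {x : Fin N → ℕ} (hx : StrictMono x) :
    HasSum (fun y : {y : Fin N → ℕ // StrictMono y} =>
      (Matrix.of fun i j => eL lam R t (x i) (y.1 j)).det * (hfun lam N y.1 : ℂ))
      (hfun lam N x : ℂ) := by
  let H (y : Fin N → ℕ) : Matrix (Fin N) (Fin N) ℂ :=
    Matrix.of fun i j => (iterAntideriv lam j (y i) : ℂ)
  let E : Matrix (Fin N) (Fin N) ℂ := Matrix.of fun i j => expShift t i j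
  have hH (y : Fin N → ℕ) (hy : StrictMono y) : (hfun lam N y : ℂ) = (H y).det := by
    rw [hfun_eq_det hy]
    exact Complex.ofRealHom.map_det _
  have hentry (i j : Fin N) :
      HasSum (fun y => eL lam R t (x i) y * (iterAntideriv lam j y : ℂ)) ((H x * E) i j) := by
    convert hasSum_eL_mul_iterAntideriv h0 hM hR t (x i) j.isLt using 1
    exact Fin.sum_univ_eq_sum_range
      (fun k => (iterAntideriv lam k (x i) : ℂ) * expShift t k j) N
  have hdet := hasSum_det_mul_det (b := fun y j => (iterAntideriv lam j y : ℂ)) hentry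
  rw [Matrix.det_mul, det_expShift, mul_one, ← hH x hx] at hdet
  exact hdet.congr_fun fun y => by rw [hH y.1 y.2]

end Semigroup

theorem stmt_9_general {lam : ℕ → ℝ} {M R : ℝ} (hpos : ∀ x, 0 < lam x) (hub : ∀ x, lam x ≤ M)
    (hR : M < R) (N : ℕ) :
    (∀ x : Fin N → ℕ, StrictMono x → 0 < hfun lam N x) ∧
    ∀ t : ℝ, ∀ x : Fin N → ℕ, StrictMono x →
      HasSum (fun y : { y : Fin N → ℕ // StrictMono y } =>
          (Matrix.of fun i j => eL lam R t (x i) (y.1 j)).det * (hfun lam N y.1 : ℂ))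
        ((hfun lam N x : ℂ)) ∧
      Summable (fun y : { y : Fin N → ℕ // StrictMono y } =>
          ‖(Matrix.of fun i j => eL lam R t (x i) (y.1 j)).det * (hfun lam N y.1 : ℂ)‖) := by
  have habs (k : ℕ) : |lam k| ≤ M := (abs_of_pos (hpos k)).trans_le (hub k)
  refine ⟨fun x hx => hfun_pos hpos hx, fun t x hx => ?_⟩
  have hsum := hasSum_det_eL_mul_hfun (fun k => (hpos k).ne') habs hR t hx
  exact ⟨hsum, hsum.summable.norm⟩

/-- 𝔥_N is strictly positive on W^N and harmonic for the
Karlin–McGregor semigroup: Σ_{y ∈ W^N} det(e^{tL}(x_i,y_j)) 𝔥_N(y) = 𝔥_N(x),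
the series converging absolutely. -/
theorem stmt_9 (lam : ℕ → ℝ) (s M : ℝ) (hs : 0 < s)
    (hlb : ∀ x, s ≤ lam x) (hub : ∀ x, lam x ≤ M)
    (R : ℝ) (hR : M < R) (N : ℕ) (hN : 1 ≤ N) :
    (∀ x : Fin N → ℕ, StrictMono x → 0 < hfun lam N x) ∧
    ∀ t : ℝ, 0 ≤ t → ∀ x : Fin N → ℕ, StrictMono x →
      HasSum (fun y : { y : Fin N → ℕ // StrictMono y } =>
          (Matrix.of fun i j => eL lam R t (x i) (y.1 j)).det * (hfun lam N y.1 : ℂ))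
        ((hfun lam N x : ℂ)) ∧
      Summable (fun y : { y : Fin N → ℕ // StrictMono y } =>
          ‖(Matrix.of fun i j => eL lam R t (x i) (y.1 j)).det * (hfun lam N y.1 : ℂ)‖) := by
  obtain ⟨hpos, hharm⟩ := stmt_9_general (fun x => hs.trans_le (hlb x)) hub hR N
  exact ⟨hpos, fun t _ => hharm t⟩
end

section
/- Let λ : ℤ₊ → ℝ satisfy (UB) and fix t ≥ 0. Define for x ∈ ℤ₊ and integers i, j ≥ 0: Ψ_i(x) = −(1/λ(x)) · (1/(2πi)) ∮_{C_λ} ψ_x(w) w^i e^{−tw} dw and Φ_j(x) = (1/(2πi)) ∮_{C_0} p_x(u) e^{tu} u^{−(j+1)} du, where C_λ is the counterclockwise circle |w| = R for a fixed R > M and C_0 is the counterclockwise circle |u| = r for a fixed 0 < r < s. Then the two families are biorthogonal: for all i, j ≥ 0, Σ_{x ∈ ℤ₊} Ψ_i(x) Φ_j(x) = 1(i = j), the series converging absolutely. -/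
open Complex MeasureTheory Finset
open scoped Real ComplexOrder

/-!
Up to normalisation, `pF lam x` is the Newton polynomial of the nodes `lam 0, …, lam (x - 1)`, and
the contour integral of `psiF lam x * f` is the divided difference of `f` at `lam 0, …, lam x`. For
entire `f` the sum over `x` of their products is therefore the Newton interpolation series of `f`,
which comes from Cauchy's formula by telescoping
`1 / (w - u) = ∑ₙ ∏_{k < n} (u - aₖ) / ∏_{k ≤ n} (w - aₖ)`. The nodes are bounded, so on a large
enough circle of `w` the ratios `|u - aₖ| / |w - aₖ|` stay below a constant less than one, and the
series may be integrated term by term, first in `w` and then against any continuous `g` in `u`. With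
`f w = w ^ i * exp (-t w)` and `g u = exp (t u) * u ^ (-(j + 1))` the exponentials cancel and the
residue of `u ^ (i - j - 1)` at `0` is left.
-/

open Filter Lagrange Metric Topology

section CircleIntegral

theorem hasSum_circleIntegral_of_norm_le {ι E : Type*} [Countable ι] [NormedAddCommGroup E]
    [NormedSpace ℂ E] [CompleteSpace E] {F : ι → ℂ → E} {f : ℂ → E} {b : ι → ℝ} {c : ℂ} {R : ℝ}
    (hR : 0 ≤ R) (hF : ∀ i, ContinuousOn (F i) (sphere c R)) (hb : Summable b)
    (hFb : ∀ i, ∀ z ∈ sphere c R, ‖F i z‖ ≤ b i)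
    (hf : ∀ z ∈ sphere c R, HasSum (fun i => F i z) (f z)) :
    HasSum (fun i => ∮ z in C(c, R), F i z) (∮ z in C(c, R), f z) := by
  have hunif : TendstoUniformlyOn (fun (s : Finset ι) z => ∑ i ∈ s, F i z) f atTop (sphere c R) :=
    (tendstoUniformlyOn_tsum hb hFb).congr_right fun z hz => (hf z hz).tsum_eq
  exact (hunif.tendsto_circleIntegral_of_continuousOn hR
    (.of_forall fun s => continuousOn_finsetSum s fun i _ => hF i)).congr fun s =>
      circleIntegral.integral_fun_sum fun i _ => (hF i).circleIntegrable hR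

theorem two_pi_I_inv_mul_circleIntegral_sub_center_zpow (c : ℂ) {R : ℝ} (hR : R ≠ 0) (n : ℤ) :
    (2 * (π : ℂ) * I)⁻¹ * (∮ z in C(c, R), (z - c) ^ n) = if n = -1 then 1 else 0 := by
  split_ifs with hn
  · simp only [hn, zpow_neg_one, circleIntegral.integral_sub_center_inv c hR,
      inv_mul_cancel₀ two_pi_I_ne_zero]
  · rw [circleIntegral.integral_sub_zpow_of_ne hn, mul_zero]

end CircleIntegral

section NewtonKernel

theorem norm_eval_nodal_div_eval_nodal_le {ι : Type*} {s : Finset ι} {v : ι → ℂ} {c u w : ℂ}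
    {M r R : ℝ} (hv : ∀ i ∈ s, v i ∈ closedBall c M) (hMR : M < R) (hu : u ∈ closedBall c r)
    (hw : w ∈ sphere c R) :
    ‖(nodal s v).eval u / (nodal s v).eval w‖ ≤ ((r + M) / (R - M)) ^ #s := by
  rw [eval_nodal, eval_nodal, ← prod_div_distrib, norm_prod, ← prod_const]
  refine prod_le_prod (fun _ _ => norm_nonneg _) fun i hi => ?_
  rw [norm_div, ← dist_eq_norm, ← dist_eq_norm]
  have hvi : dist (v i) c ≤ M := hv i hi
  have hnum : dist u (v i) ≤ r + M :=
    (dist_triangle_right u (v i) c).trans (add_le_add hu hvi)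
  have hden : R - M ≤ dist w (v i) := by
    linarith [dist_triangle w (v i) c, mem_sphere.mp hw]
  exact div_le_div₀ (dist_nonneg.trans hnum) hnum (sub_pos.mpr hMR) hden

/-- The `n`-th term `∏_{k < n} (u - a k) / ∏_{k ≤ n} (w - a k)` of the Newton expansion of the
Cauchy kernel `(w - u)⁻¹` at the nodes `a`. -/
noncomputable def newtonKernel (a : ℕ → ℂ) (n : ℕ) (w u : ℂ) : ℂ :=
  (nodal (range n) a).eval u / (nodal (range (n + 1)) a).eval w

variable {a : ℕ → ℂ} {c u w : ℂ} {M r R : ℝ}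

theorem newtonKernel_eq_inv_mul (a : ℕ → ℂ) (n : ℕ) (w u : ℂ) :
    newtonKernel a n w u =
      (w - a n)⁻¹ * ((nodal (range n) a).eval u / (nodal (range n) a).eval w) := by
  simp only [newtonKernel, eval_nodal, prod_range_succ, div_eq_mul_inv, mul_inv]
  ring

theorem sum_range_newtonKernel (hw : ∀ k, w ≠ a k) (hwu : w ≠ u) (n : ℕ) :
    ∑ k ∈ range n, newtonKernel a k w u =
      (1 - (nodal (range n) a).eval u / (nodal (range n) a).eval w) / (w - u) := by
  have hwu' : w - u ≠ 0 := sub_ne_zero.mpr hwu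
  induction n with
  | zero => simp
  | succ n ih =>
    have hwn : w - a n ≠ 0 := sub_ne_zero.mpr (hw n)
    have hprod : ∏ k ∈ range n, (w - a k) ≠ 0 :=
      prod_ne_zero_iff.mpr fun k _ => sub_ne_zero.mpr (hw k)
    rw [sum_range_succ, ih, newtonKernel]
    simp only [eval_nodal, prod_range_succ]
    field_simp
    ring

theorem norm_newtonKernel_le (ha : ∀ k, a k ∈ closedBall c M) (hMR : M < R)
    (hu : u ∈ closedBall c r) (hw : w ∈ sphere c R) (n : ℕ) :
    ‖newtonKernel a n w u‖ ≤ (R - M)⁻¹ * ((r + M) / (R - M)) ^ n := by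
  have hratio := norm_eval_nodal_div_eval_nodal_le (s := range n) (fun k _ => ha k) hMR hu hw
  have hden : R - M ≤ ‖w - a n‖ := by
    rw [← dist_eq_norm]
    linarith [dist_triangle w (a n) c, mem_sphere.mp hw, mem_closedBall.mp (ha n)]
  have hpos : 0 < R - M := sub_pos.mpr hMR
  rw [card_range] at hratio
  rw [newtonKernel_eq_inv_mul, norm_mul, norm_inv]
  gcongr

theorem ne_of_mem_sphere_of_mem_closedBall {X : Type*} [PseudoMetricSpace X] {x y z : X} {M R : ℝ}
    (hMR : M < R) (hx : x ∈ sphere z R) (hy : y ∈ closedBall z M) : x ≠ y := by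
  rintro rfl
  exact hMR.not_ge (mem_sphere.mp hx ▸ mem_closedBall.mp hy)

theorem add_div_sub_mem_Ico (hM : 0 ≤ M) (hr : 0 ≤ r) (hR : r + M < R - M) :
    (r + M) / (R - M) ∈ Set.Ico 0 1 := by
  have hpos : 0 < R - M := by linarith
  exact ⟨by positivity, (div_lt_one hpos).mpr hR⟩

theorem hasSum_newtonKernel (ha : ∀ k, a k ∈ closedBall c M) (hR : r + M < R - M)
    (hu : u ∈ closedBall c r) (hw : w ∈ sphere c R) :
    HasSum (fun n => newtonKernel a n w u) (w - u)⁻¹ := by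
  have hr : 0 ≤ r := dist_nonneg.trans hu
  have hM : 0 ≤ M := dist_nonneg.trans (ha 0)
  obtain ⟨hq0, hq1⟩ := add_div_sub_mem_Ico hM hr hR
  have hMR : M < R := by linarith
  have hwu : w ≠ u := ne_of_mem_sphere_of_mem_closedBall (by linarith) hw hu
  have hwa : ∀ k, w ≠ a k := fun k => ne_of_mem_sphere_of_mem_closedBall hMR hw (ha k)
  have hsummable : Summable fun n => newtonKernel a n w u :=
    ((summable_geometric_of_lt_one hq0 hq1).mul_left _).of_norm_bounded
      (norm_newtonKernel_le ha hMR hu hw)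
  have hratio : Tendsto (fun n => (nodal (range n) a).eval u / (nodal (range n) a).eval w)
      atTop (𝓝 0) :=
    squeeze_zero_norm
      (fun n => by
        simpa only [card_range] using norm_eval_nodal_div_eval_nodal_le (s := range n)
          (fun k _ => ha k) hMR hu hw)
      (tendsto_pow_atTop_nhds_zero_of_lt_one hq0 hq1)
  rw [hsummable.hasSum_iff_tendsto_nat]
  simpa only [sum_range_newtonKernel hwa hwu, sub_zero, one_div] using
    (hratio.const_sub 1).div_const (w - u)

end NewtonKernel

section NewtonSeries

variable {E : Type*} [NormedAddCommGroup E] [NormedSpace ℂ E] {a : ℕ → ℂ} {f : ℂ → E} {c u : ℂ}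
  {K M r R : ℝ}

/-- The divided difference `f[a 0, …, a n]`, encoded by Hermite's integral formula on the circle
`|w - c| = R`. It has this meaning for `f` holomorphic on the disc when the circle encloses the
nodes `a 0, …, a n`, which may repeat. -/
noncomputable def dividedDifference (a : ℕ → ℂ) (n : ℕ) (c : ℂ) (R : ℝ) (f : ℂ → E) : E :=
  (2 * (π : ℂ) * I)⁻¹ • ∮ w in C(c, R), ((nodal (range (n + 1)) a).eval w)⁻¹ • f w

theorem eval_nodal_smul_dividedDifference (a : ℕ → ℂ) (n : ℕ) (c : ℂ) (R : ℝ) (f : ℂ → E) (u : ℂ) :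
    (nodal (range n) a).eval u • dividedDifference a n c R f =
      (2 * (π : ℂ) * I)⁻¹ • ∮ w in C(c, R), newtonKernel a n w u • f w := by
  simp only [dividedDifference, newtonKernel, div_eq_mul_inv, mul_smul,
    circleIntegral.integral_smul]
  rw [smul_comm]

theorem dividedDifference_eq_of_differentiableOn_annulus {R' : ℝ} (hR : 0 < R) (hRR' : R ≤ R')
    {n : ℕ} (ha : ∀ k ∈ range (n + 1), a k ∈ ball c R)
    (hfc : ContinuousOn f (closedBall c R' \ ball c R))
    (hfd : DifferentiableOn ℂ f (ball c R' \ closedBall c R)) :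
    dividedDifference a n c R' f = dividedDifference a n c R f := by
  have hnodal : ∀ w ∉ ball c R, (nodal (range (n + 1)) a).eval w ≠ 0 := fun w hw =>
    eval_nodal_not_at_node fun k hk h => hw (h ▸ ha k hk)
  unfold dividedDifference
  congr 1
  refine circleIntegral_eq_of_differentiable_on_annulus_off_countable hR hRR' Set.countable_empty
    (((Polynomial.continuous _).continuousOn.inv₀ fun w hw => hnodal w hw.2).smul hfc)
    fun w ⟨hw, _⟩ => ?_
  have hfw := hfd.differentiableAt ((isOpen_ball.sdiff isClosed_closedBall).mem_nhds hw)
  exact ((nodal (range (n + 1)) a).differentiableAt.fun_inv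
    (hnodal w fun h => hw.2 (ball_subset_closedBall h))).smul hfw

theorem norm_newtonKernel_smul_le (ha : ∀ k, a k ∈ closedBall c M) (hMR : M < R)
    (hu : u ∈ closedBall c r) (hK : ∀ w ∈ sphere c R, ‖f w‖ ≤ K) (n : ℕ) {w : ℂ}
    (hw : w ∈ sphere c R) :
    ‖newtonKernel a n w u • f w‖ ≤ (R - M)⁻¹ * ((r + M) / (R - M)) ^ n * K := by
  have hkernel := norm_newtonKernel_le ha hMR hu hw n
  rw [norm_smul]
  exact mul_le_mul hkernel (hK w hw) (norm_nonneg _) ((norm_nonneg _).trans hkernel)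

theorem norm_eval_nodal_smul_dividedDifference_le (ha : ∀ k, a k ∈ closedBall c M) (hMR : M < R)
    (hu : u ∈ closedBall c r) (hK : ∀ w ∈ sphere c R, ‖f w‖ ≤ K) (n : ℕ) :
    ‖(nodal (range n) a).eval u • dividedDifference a n c R f‖ ≤
      R * ((R - M)⁻¹ * ((r + M) / (R - M)) ^ n * K) := by
  have hR : 0 ≤ R := (dist_nonneg.trans (ha 0)).trans hMR.le
  rw [eval_nodal_smul_dividedDifference]
  exact circleIntegral.norm_two_pi_i_inv_smul_integral_le_of_norm_le_const hR fun _ hw =>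
    norm_newtonKernel_smul_le ha hMR hu hK n hw

theorem hasSum_eval_nodal_smul_dividedDifference [CompleteSpace E]
    (ha : ∀ k, a k ∈ closedBall c M) (hR : r + M < R - M) (hf : DiffContOnCl ℂ f (ball c R))
    (hu : u ∈ closedBall c r) :
    HasSum (fun n => (nodal (range n) a).eval u • dividedDifference a n c R f) (f u) := by
  have hr : 0 ≤ r := dist_nonneg.trans hu
  have hM : 0 ≤ M := dist_nonneg.trans (ha 0)
  have hMR : M < R := by linarith
  obtain ⟨hq0, hq1⟩ := add_div_sub_mem_Ico hM hr hR
  have hfc : ContinuousOn f (sphere c R) := hf.continuousOn_ball.mono sphere_subset_closedBall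
  obtain ⟨K, hK⟩ := (isCompact_sphere c R).exists_bound_of_continuousOn hfc
  have hterm : ∀ n, ContinuousOn (fun w => newtonKernel a n w u • f w) (sphere c R) := fun n =>
    (continuousOn_const.div (Polynomial.continuous _).continuousOn fun w hw =>
      eval_nodal_not_at_node fun k _ =>
        ne_of_mem_sphere_of_mem_closedBall hMR hw (ha k)).smul hfc
  have hintegral := hasSum_circleIntegral_of_norm_le (hM.trans hMR.le) hterm
    (((summable_geometric_of_lt_one hq0 hq1).mul_left _).mul_right K)
    (fun n w hw => norm_newtonKernel_smul_le ha hMR hu hK n hw)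
    fun w hw => (hasSum_newtonKernel ha hR hu hw).smul_const (f w)
  have hu' : u ∈ ball c R := closedBall_subset_ball (by linarith) hu
  simpa only [eval_nodal_smul_dividedDifference,
    hf.two_pi_i_inv_smul_circleIntegral_sub_inv_smul hu'] using
    hintegral.const_smul (2 * (π : ℂ) * I)⁻¹

theorem hasSum_circleIntegral_smul_dividedDifference [CompleteSpace E]
    (ha : ∀ k, a k ∈ closedBall c M) (hr : 0 ≤ r) (hR : r + M < R - M)
    (hf : DiffContOnCl ℂ f (ball c R)) {g : ℂ → ℂ} (hg : ContinuousOn g (sphere c r)) :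
    HasSum (fun n => (∮ u in C(c, r), (nodal (range n) a).eval u * g u) •
      dividedDifference a n c R f) (∮ u in C(c, r), g u • f u) := by
  have hM : 0 ≤ M := dist_nonneg.trans (ha 0)
  have hMR : M < R := by linarith
  obtain ⟨hq0, hq1⟩ := add_div_sub_mem_Ico hM hr hR
  obtain ⟨K, hK⟩ := (isCompact_sphere c R).exists_bound_of_continuousOn
    (hf.continuousOn_ball.mono sphere_subset_closedBall)
  obtain ⟨L, hL⟩ := (isCompact_sphere c r).exists_bound_of_continuousOn hg
  have hsummable : Summable fun n => (R - M)⁻¹ * ((r + M) / (R - M)) ^ n * K :=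
    ((summable_geometric_of_lt_one hq0 hq1).mul_left _).mul_right K
  simp only [← circleIntegral.integral_smul_const, mul_comm _ (g _), mul_smul]
  refine hasSum_circleIntegral_of_norm_le hr
    (fun n => hg.smul ((Polynomial.continuous _).continuousOn.smul continuousOn_const))
    ((hsummable.mul_left R).mul_left L) (fun n u hu => ?_) fun u hu => ?_
  · rw [norm_smul]
    exact mul_le_mul (hL u hu)
      (norm_eval_nodal_smul_dividedDifference_le ha hMR (sphere_subset_closedBall hu) hK n)
      (norm_nonneg _) ((norm_nonneg _).trans (hL u hu))
  · exact (hasSum_eval_nodal_smul_dividedDifference ha hR hf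
      (sphere_subset_closedBall hu)).const_smul (g u)

theorem hasSum_circleIntegral_smul_dividedDifference_of_differentiable [CompleteSpace E]
    (ha : ∀ k, a k ∈ closedBall c M) (hMR : M < R) (hr : 0 ≤ r) (hf : Differentiable ℂ f)
    {g : ℂ → ℂ} (hg : ContinuousOn g (sphere c r)) :
    HasSum (fun n => (∮ u in C(c, r), (nodal (range n) a).eval u * g u) •
      dividedDifference a n c R f) (∮ u in C(c, r), g u • f u) := by
  have hM : 0 ≤ M := dist_nonneg.trans (ha 0)
  obtain ⟨R', hRR', hR'⟩ : ∃ R', R ≤ R' ∧ r + M < R' - M :=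
    ⟨R + (r + 2 * M), by linarith, by linarith⟩
  have hdeform : ∀ n, dividedDifference a n c R f = dividedDifference a n c R' f := fun n =>
    (dividedDifference_eq_of_differentiableOn_annulus (hM.trans_lt hMR) hRR'
      (fun k _ => closedBall_subset_ball hMR (ha k)) hf.continuous.continuousOn
      hf.differentiableOn).symm
  simpa only [hdeform] using
    hasSum_circleIntegral_smul_dividedDifference ha hr hR' hf.diffContOnCl hg

end NewtonSeries

section Biorthogonality

variable {lam : ℕ → ℝ} {M R r : ℝ}

theorem pF_eq_inv_mul_eval_nodal (lam : ℕ → ℝ) (x : ℕ) (u : ℂ) :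
    pF lam x u =
      (∏ k ∈ range x, -(lam k : ℂ))⁻¹ * (nodal (range x) fun k => (lam k : ℂ)).eval u := by
  rw [pF, eval_nodal, ← prod_inv_distrib, ← prod_mul_distrib]
  refine prod_congr rfl fun k _ => ?_
  rw [div_eq_mul_inv, inv_neg]
  ring

theorem neg_one_div_mul_psiF {x : ℕ} (hx : lam x ≠ 0) (w : ℂ) :
    -(1 / (lam x : ℂ)) * psiF lam x w =
      (∏ k ∈ range x, -(lam k : ℂ)) *
        ((nodal (range (x + 1)) fun k => (lam k : ℂ)).eval w)⁻¹ := by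
  have hfactor : ∀ k, (lam k : ℂ) / (lam k - w) = -(lam k : ℂ) * (w - lam k)⁻¹ := fun k => by
    rw [← neg_sub w, div_neg, neg_mul, div_eq_mul_inv]
  have hx' : (lam x : ℂ) ≠ 0 := ofReal_ne_zero.mpr hx
  simp only [psiF, eval_nodal, hfactor, prod_mul_distrib, prod_inv_distrib]
  rw [prod_range_succ fun k => -(lam k : ℂ)]
  field_simp

theorem circleIntegral_pF_mul (lam : ℕ → ℝ) (x : ℕ) (c : ℂ) (r : ℝ) (g : ℂ → ℂ) :
    (∮ u in C(c, r), pF lam x u * g u) = (∏ k ∈ range x, -(lam k : ℂ))⁻¹ *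
      ∮ u in C(c, r), (nodal (range x) fun k => (lam k : ℂ)).eval u * g u := by
  simp only [pF_eq_inv_mul_eval_nodal, mul_assoc, circleIntegral.integral_const_mul]

theorem neg_one_div_mul_circleIntegral_psiF_mul {x : ℕ} (hx : lam x ≠ 0) (c : ℂ) (R : ℝ)
    (f : ℂ → ℂ) :
    -(1 / (lam x : ℂ)) * ((2 * (π : ℂ) * I)⁻¹ * ∮ w in C(c, R), psiF lam x w * f w) =
      (∏ k ∈ range x, -(lam k : ℂ)) * dividedDifference (fun k => (lam k : ℂ)) x c R f := by
  rw [mul_left_comm, ← circleIntegral.integral_const_mul]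
  simp only [← mul_assoc (-(1 / (lam x : ℂ))), neg_one_div_mul_psiF hx, dividedDifference,
    mul_assoc, circleIntegral.integral_const_mul, smul_eq_mul]
  rw [mul_left_comm]

theorem hasSum_circleIntegral_psiF_mul_circleIntegral_pF (hlam : ∀ x, lam x ≠ 0)
    (hM : ∀ x, |lam x| ≤ M) (hMR : M < R) (hr : 0 ≤ r) {f g : ℂ → ℂ} (hf : Differentiable ℂ f)
    (hg : ContinuousOn g (sphere 0 r)) :
    HasSum (fun x => (-(1 / (lam x : ℂ)) * ((2 * (π : ℂ) * I)⁻¹ *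
        ∮ w in C(0, R), psiF lam x w * f w)) *
        ((2 * (π : ℂ) * I)⁻¹ * ∮ u in C(0, r), pF lam x u * g u))
      ((2 * (π : ℂ) * I)⁻¹ * ∮ u in C(0, r), g u * f u) := by
  have ha : ∀ k, (lam k : ℂ) ∈ closedBall 0 M := fun k => by
    simpa only [mem_closedBall_zero_iff, norm_real, Real.norm_eq_abs] using hM k
  refine ((hasSum_circleIntegral_smul_dividedDifference_of_differentiable ha hMR hr hf
    hg).mul_left (2 * (π : ℂ) * I)⁻¹).congr_fun fun x => ?_
  rw [neg_one_div_mul_circleIntegral_psiF_mul (hlam x), circleIntegral_pF_mul, smul_eq_mul]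
  have hscale : ∏ k ∈ range x, -(lam k : ℂ) ≠ 0 :=
    prod_ne_zero_iff.mpr fun k _ => neg_ne_zero.mpr (ofReal_ne_zero.mpr (hlam k))
  field_simp

theorem exp_mul_zpow_mul_pow_mul_exp_neg {u : ℂ} (hu : u ≠ 0) (t : ℂ) (i j : ℕ) :
    Complex.exp (t * u) * u ^ (-((j : ℤ) + 1)) * (u ^ i * Complex.exp (-t * u)) =
      u ^ ((i : ℤ) - j - 1) := by
  have hexp : Complex.exp (t * u) * Complex.exp (-t * u) = 1 := by
    rw [← Complex.exp_add, neg_mul, add_neg_cancel, Complex.exp_zero]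
  calc
    _ = Complex.exp (t * u) * Complex.exp (-t * u) * (u ^ (-((j : ℤ) + 1)) * u ^ (i : ℤ)) := by
      rw [zpow_natCast]
      ring
    _ = u ^ ((i : ℤ) - j - 1) := by
      rw [hexp, one_mul, ← zpow_add₀ hu]
      congr 1
      ring

theorem two_pi_I_inv_mul_circleIntegral_exp_mul_zpow (hr : 0 < r) (t : ℂ) (i j : ℕ) :
    (2 * (π : ℂ) * I)⁻¹ * (∮ u in C(0, r),
        Complex.exp (t * u) * u ^ (-((j : ℤ) + 1)) * (u ^ i * Complex.exp (-t * u))) =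
      if i = j then 1 else 0 := by
  have hij : (i : ℤ) - j - 1 = -1 ↔ i = j := by omega
  rw [circleIntegral.integral_congr hr.le fun u hu =>
    exp_mul_zpow_mul_pow_mul_exp_neg (ne_of_mem_sphere hu hr.ne') t i j]
  simpa only [sub_zero, hij] using
    two_pi_I_inv_mul_circleIntegral_sub_center_zpow 0 hr.ne' ((i : ℤ) - j - 1)

theorem stmt_18_general (hlam : ∀ x, lam x ≠ 0) (hM : ∀ x, |lam x| ≤ M) (hMR : M < R)
    (hr : 0 < r) (t : ℂ) (i j : ℕ) :
    HasSum (fun x : ℕ =>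
        (-(1 / (lam x : ℂ)) * ((2 * (π : ℂ) * I)⁻¹ *
            ∮ w in C(0, R), psiF lam x w * w ^ i * Complex.exp (-t * w))) *
        ((2 * (π : ℂ) * I)⁻¹ *
            ∮ u in C(0, r), pF lam x u * Complex.exp (t * u) * u ^ (-((j : ℤ) + 1))))
      (if i = j then 1 else 0) ∧
    Summable (fun x : ℕ =>
        ‖(-(1 / (lam x : ℂ)) * ((2 * (π : ℂ) * I)⁻¹ *
            ∮ w in C(0, R), psiF lam x w * w ^ i * Complex.exp (-t * w))) *
        ((2 * (π : ℂ) * I)⁻¹ *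
            ∮ u in C(0, r), pF lam x u * Complex.exp (t * u) * u ^ (-((j : ℤ) + 1)))‖) := by
  suffices h : HasSum _ _ from ⟨h, h.summable.norm⟩
  have hg : ContinuousOn (fun u => Complex.exp (t * u) * u ^ (-((j : ℤ) + 1))) (sphere 0 r) :=
    .mul (by fun_prop) (continuousOn_id.zpow₀ _ fun u hu => .inl (ne_of_mem_sphere hu hr.ne'))
  have hsum := hasSum_circleIntegral_psiF_mul_circleIntegral_pF hlam hM hMR hr.le
    (f := fun w => w ^ i * Complex.exp (-t * w)) (by fun_prop) hg
  simpa only [← mul_assoc (psiF _ _ _), ← mul_assoc (pF _ _ _),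
    two_pi_I_inv_mul_circleIntegral_exp_mul_zpow hr] using hsum

end Biorthogonality

/-- biorthogonality. With
Ψ_i(x) = −(1/λ(x)) (1/2πi) ∮_{|w|=R} ψ_x(w) w^i e^{−tw} dw and
Φ_j(x) = (1/2πi) ∮_{|u|=r} p_x(u) e^{tu} u^{−(j+1)} du (R > M, 0 < r < s),
one has Σ_{x≥0} Ψ_i(x) Φ_j(x) = 1(i=j), absolutely convergent. -/
theorem stmt_18 (lam : ℕ → ℝ) (s M : ℝ) (hs : 0 < s)
    (hlb : ∀ x, s ≤ lam x) (hub : ∀ x, lam x ≤ M)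
    (t : ℝ) (ht : 0 ≤ t) (R r : ℝ) (hR : M < R) (hr0 : 0 < r) (hrs : r < s)
    (i j : ℕ) :
    HasSum (fun x : ℕ =>
        (-(1 / (lam x : ℂ)) * ((2 * (Real.pi : ℂ) * Complex.I)⁻¹ *
            ∮ w in C(0, R), psiF lam x w * w ^ i * Complex.exp (-(t : ℂ) * w))) *
        ((2 * (Real.pi : ℂ) * Complex.I)⁻¹ *
            ∮ u in C(0, r), pF lam x u * Complex.exp ((t : ℂ) * u) * u ^ (-((j : ℤ) + 1))))
      (if i = j then 1 else 0) ∧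
    Summable (fun x : ℕ =>
        ‖(-(1 / (lam x : ℂ)) * ((2 * (Real.pi : ℂ) * Complex.I)⁻¹ *
            ∮ w in C(0, R), psiF lam x w * w ^ i * Complex.exp (-(t : ℂ) * w))) *
        ((2 * (Real.pi : ℂ) * Complex.I)⁻¹ *
            ∮ u in C(0, r), pF lam x u * Complex.exp ((t : ℂ) * u) * u ^ (-((j : ℤ) + 1)))‖) := by
  exact stmt_18_general (fun x => (hs.trans_le (hlb x)).ne')
    (fun x => (abs_of_pos (hs.trans_le (hlb x))).trans_le (hub x)) hR hr0 t i j
end
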